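/- (Bounded bisimulation preorder versus inclusion of bounded theories.) Let (M,w) and (M',w') be finite pointed Kripke models over a finite variable set q̄, and let n ≥ 0. Then (M,w) ≼_{n,q̄} (M',w') if and only if every formula of depth ≤ n with variables among q̄ that is forced at (M,w) is forced at (M',w') (i.e., Th_{n,q̄}(M,w) ⊆ Th_{n,q̄}(M',w')). -/

import Mathlib

/-!
Left to right, the proof is by induction on the formula: if `w ≼_{n+1} w'`, then `w'` itself is
`n`-bisimilar to some successor `v` of `w`, which transfers variables by persistence, and an
implication `a → b` of depth at most `n + 1` is transferred at each successor `v'` of `w'` by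
passing to an `n`-bisimilar successor of `w`, where `a` and `b` have depth at most `n`.

Right to left, suppose some successor `v'` of `w'` has no `n`-bisimilar successor of `w`. By
induction on `n`, each successor `v` of `w` is told apart from `v'` by a formula of depth at most
`n`. Finitely many such formulas suffice because `M` is finite. Then `w` forces the implication from
the conjunction of those true at `v'` to the disjunction of those false at `v'`, whereas `v'` does
not, contradicting the inclusion of theories at depth `n + 1`. The empty conjunction is not
available (`⊥ → ⊥` has depth 1, which is too large for an antecedent when `n = 0`), but if none of
the formulas is true at `v'`, then `w` already forces the disjunction (`exists_conj`,
`exists_disj`, `BLe.of_forces`).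
-/

/-- Intuitionistic propositional formulas over variables indexed by `ℕ`. -/
inductive IPForm : Type
  | var : ℕ → IPForm
  | bot : IPForm
  | conj : IPForm → IPForm → IPForm
  | disj : IPForm → IPForm → IPForm
  | impl : IPForm → IPForm → IPForm

/-- The set of propositional variables occurring in a formula. -/
def IPForm.vars : IPForm → Finset ℕ
  | .var p => {p}
  | .bot => ∅
  | .conj a b => a.vars ∪ b.vars
  | .disj a b => a.vars ∪ b.vars
  | .impl a b => a.vars ∪ b.vars

/-- The implication-nesting depth of a formula. -/
def IPForm.depth : IPForm → ℕ
  | .var _ => 0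
  | .bot => 0
  | .conj a b => max a.depth b.depth
  | .disj a b => max a.depth b.depth
  | .impl a b => max a.depth b.depth + 1

/-- An intuitionistic Kripke model: a preorder together with a persistent
valuation of the propositional variables. -/
structure KModel where
  W : Type
  rel : W → W → Prop
  refl : ∀ w, rel w w
  trans : ∀ {u v w}, rel u v → rel v w → rel u w
  val : ℕ → W → Prop
  mono : ∀ {p u v}, rel u v → val p u → val p v

/-- The intuitionistic forcing relation. -/
def KModel.Forces (M : KModel) : M.W → IPForm → Prop
  | w, .var p => M.val p w
  | _, .bot => False
  | w, .conj a b => M.Forces w a ∧ M.Forces w b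
  | w, .disj a b => M.Forces w a ∨ M.Forces w b
  | w, .impl a b => ∀ v, M.rel w v → M.Forces v a → M.Forces v b

/-- Semantic entailment over finite Kripke models. -/
def Entails (φ ψ : IPForm) : Prop :=
  ∀ (M : KModel), Finite M.W → ∀ w : M.W, M.Forces w φ → M.Forces w ψ

/-- The bounded-bisimulation preorder ≼_{n,q̄} on pointed models:
`BLe q 0 M w M' w'` says w' satisfies (among q̄) every variable satisfied by w;
`BLe q (n+1) M w M' w'` says every successor of w' admits a successor of w that
is n-bisimilar to it (n-bisimilarity being `BLe` in both directions). -/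
def BLe (q : Finset ℕ) : ℕ → ∀ (M : KModel), M.W → ∀ (M' : KModel), M'.W → Prop
  | 0 => fun M w M' w' => ∀ p ∈ q, M.val p w → M'.val p w'
  | n + 1 => fun M w M' w' =>
      ∀ v', M'.rel w' v' → ∃ v, M.rel w v ∧ BLe q n M v M' v' ∧ BLe q n M' v' M v

theorem KModel.Forces.persist {M : KModel} {φ : IPForm} {u v : M.W} (h : M.rel u v)
    (hu : M.Forces u φ) : M.Forces v φ := by
  induction φ with
  | var p => exact M.mono h hu
  | bot => exact hu
  | conj a b iha ihb => exact ⟨iha hu.1, ihb hu.2⟩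
  | disj a b iha ihb => exact hu.imp iha ihb
  | impl a b _ _ => exact fun x hx => hu x (M.trans h hx)

/-- `φ` has depth at most `n` and its variables lie in `q`. -/
def IPForm.Bounded (q : Finset ℕ) (n : ℕ) (φ : IPForm) : Prop :=
  φ.depth ≤ n ∧ φ.vars ⊆ q

theorem exists_disj {q : Finset ℕ} {n : ℕ} {S : Set IPForm} (hS : S.Finite)
    (hb : ∀ φ ∈ S, φ.Bounded q n) :
    ∃ ψ : IPForm, ψ.Bounded q n ∧
      ∀ (M : KModel) (w : M.W), M.Forces w ψ ↔ ∃ φ ∈ S, M.Forces w φ := by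
  induction S, hS using Set.Finite.induction_on with
  | empty => exact ⟨.bot, by simp [IPForm.Bounded, IPForm.depth, IPForm.vars],
      by simp [KModel.Forces]⟩
  | @insert a S _ _ ih =>
    obtain ⟨ψ, hψ, h⟩ := ih fun φ hφ => hb φ (Set.mem_insert_of_mem _ hφ)
    have ha := hb a (Set.mem_insert _ _)
    exact ⟨.disj a ψ, ⟨max_le ha.1 hψ.1, Finset.union_subset ha.2 hψ.2⟩,
      by simp [KModel.Forces, h]⟩

/-- The formula `a` stands in for `⊤`, which has no representative of depth 0. -/
theorem exists_conj {q : Finset ℕ} {n : ℕ} {S : Set IPForm} (hS : S.Finite)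
    (hb : ∀ φ ∈ S, φ.Bounded q n) {a : IPForm} (ha : a.Bounded q n) :
    ∃ ψ : IPForm, ψ.Bounded q n ∧
      ∀ (M : KModel) (w : M.W), M.Forces w ψ ↔ M.Forces w a ∧ ∀ φ ∈ S, M.Forces w φ := by
  induction S, hS using Set.Finite.induction_on with
  | empty => exact ⟨a, ha, by simp⟩
  | @insert b S _ _ ih =>
    obtain ⟨ψ, hψ, h⟩ := ih fun φ hφ => hb φ (Set.mem_insert_of_mem _ hφ)
    have hb' := hb b (Set.mem_insert _ _)
    exact ⟨.conj b ψ, ⟨max_le hb'.1 hψ.1, Finset.union_subset hb'.2 hψ.2⟩,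
      by simp [KModel.Forces, h, and_left_comm]⟩

theorem BLe.forces {q : Finset ℕ} {n : ℕ} {M M' : KModel} {w : M.W} {w' : M'.W}
    (h : BLe q n M w M' w') {φ : IPForm} (hφ : φ.Bounded q n) (hw : M.Forces w φ) :
    M'.Forces w' φ := by
  induction φ generalizing n M M' w w' with
  | var p =>
    have hp : p ∈ q := by simpa [IPForm.vars] using hφ.2
    induction n generalizing M M' w w' with
    | zero => exact h p hp hw
    | succ n ih =>
      obtain ⟨v, hv, hvw, -⟩ := h w' (M'.refl w')
      exact ih hvw ⟨Nat.zero_le _, hφ.2⟩ (hw.persist hv)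
  | bot => exact hw
  | conj a b iha ihb =>
    obtain ⟨hd, hv⟩ := hφ
    simp only [IPForm.depth, IPForm.vars, max_le_iff, Finset.union_subset_iff] at hd hv
    exact ⟨iha h ⟨hd.1, hv.1⟩ hw.1, ihb h ⟨hd.2, hv.2⟩ hw.2⟩
  | disj a b iha ihb =>
    obtain ⟨hd, hv⟩ := hφ
    simp only [IPForm.depth, IPForm.vars, max_le_iff, Finset.union_subset_iff] at hd hv
    exact hw.imp (iha h ⟨hd.1, hv.1⟩) (ihb h ⟨hd.2, hv.2⟩)
  | impl a b iha ihb =>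
    obtain ⟨hd, hv⟩ := hφ
    cases n with
    | zero => simp [IPForm.depth] at hd
    | succ n =>
      simp only [IPForm.depth, IPForm.vars, Nat.add_le_add_iff_right, max_le_iff,
        Finset.union_subset_iff] at hd hv
      intro v' hv' ha
      obtain ⟨v, hwv, h1, h2⟩ := h v' hv'
      exact ihb h1 ⟨hd.2, hv.2⟩ (hw v hwv (iha h2 ⟨hd.1, hv.1⟩ ha))

theorem BLe.of_forces {q : Finset ℕ} {n : ℕ} {M M' : KModel} (hM : Finite M.W)
    (hM' : Finite M'.W) {w : M.W} {w' : M'.W}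
    (h : ∀ φ : IPForm, φ.Bounded q n → M.Forces w φ → M'.Forces w' φ) :
    BLe q n M w M' w' := by
  induction n generalizing M M' w w' with
  | zero =>
    exact fun p hp hw => h (.var p) ⟨le_rfl, by simpa [IPForm.vars] using hp⟩ hw
  | succ n ih =>
    intro v' hv'
    by_contra! hno
    have key : ∀ v, ∃ χ : IPForm, M.rel w v →
        χ.Bounded q n ∧ ¬ (M.Forces v χ ↔ M'.Forces v' χ) := by
      intro v
      by_contra! hc
      have hwv : M.rel w v := (hc .bot).1
      exact hno v hwv (ih hM hM' fun φ hφ => ((hc φ).2 hφ).1)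
        (ih hM' hM fun φ hφ => ((hc φ).2 hφ).2)
    choose f hf using key
    have hfin : (Set.range f).Finite := Set.finite_range f
    -- The separating formulas that are false, respectively true, at `v'`.
    let S : Set IPForm := {χ | χ ∈ Set.range f ∧ χ.Bounded q n ∧ ¬ M'.Forces v' χ}
    let T : Set IPForm := {χ | χ ∈ Set.range f ∧ χ.Bounded q n ∧ M'.Forces v' χ}
    obtain ⟨δ, hδ, hδS⟩ := exists_disj (S := S) (hfin.subset fun _ h => h.1) fun _ h => h.2.1
    have hδv' : ¬ M'.Forces v' δ := by
      rw [hδS]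
      rintro ⟨χ, hχ, hχv⟩
      exact hχ.2.2 hχv
    have hforce : ∀ v, M.rel w v → (∀ χ ∈ T, M.Forces v χ) → M.Forces v δ := by
      intro v hv hT
      obtain ⟨hb, hne⟩ := hf v hv
      by_cases hv'f : M'.Forces v' (f v)
      · exact absurd (iff_of_true (hT _ ⟨⟨v, rfl⟩, hb, hv'f⟩) hv'f) hne
      · have hvf : M.Forces v (f v) := by
          by_contra hvf
          exact hne (iff_of_false hvf hv'f)
        exact (hδS M v).2 ⟨f v, ⟨⟨v, rfl⟩, hb, hv'f⟩, hvf⟩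
    rcases T.eq_empty_or_nonempty with hT | ⟨a, ha⟩
    · have hw : M.Forces w δ := hforce w (M.refl w) (by simp [hT])
      exact hδv' ((h δ ⟨hδ.1.trans (Nat.le_succ n), hδ.2⟩ hw).persist hv')
    · obtain ⟨γ, hγ, hγT⟩ :=
        exists_conj (S := T) (hfin.subset fun _ h => h.1) (fun _ h => h.2.1) ha.2.1
      have hw : M.Forces w (.impl γ δ) := fun v hv hvγ => hforce v hv ((hγT M v).1 hvγ).2
      have hw' := h (.impl γ δ)
        ⟨Nat.succ_le_succ (max_le hγ.1 hδ.1), Finset.union_subset hγ.2 hδ.2⟩ hw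
      exact hδv' (hw' v' hv' ((hγT M' v').2 ⟨ha.2.2, fun _ hχ => hχ.2.2⟩))

/-- **Bounded bisimulation preorder versus inclusion of bounded theories.**
For finite pointed models, (M,w) ≼_{n,q̄} (M',w') holds iff every formula of
depth ≤ n with variables among q̄ forced at (M,w) is forced at (M',w'). -/
theorem bLe_iff_theory_subset (qbar : Finset ℕ) (n : ℕ)
    (M M' : KModel) (hM : Finite M.W) (hM' : Finite M'.W)
    (w : M.W) (w' : M'.W) :
    BLe qbar n M w M' w' ↔
      ∀ φ : IPForm, φ.depth ≤ n → φ.vars ⊆ qbar →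
        M.Forces w φ → M'.Forces w' φ := by
  exact ⟨fun h φ hd hv => h.forces ⟨hd, hv⟩, fun h => .of_forces hM hM' fun φ hφ => h φ hφ.1 hφ.2⟩
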